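/- arXiv:1205.3878 — 3 statements merged into one kernel-verified Lean document; each statement's English description precedes it below -/
import Mathlib

section
/- Let C be a binary completely regular code of length 15 with minimum distance 5 containing the zero vector. Then the set C(5) of weight-5 codewords forms a 2-(15,5,4) design: for every 2-element subset T of the 15 coordinates, there are exactly 4 codewords of weight 5 whose support contains T. In particular |C(5)| = 42. -/
open Set

/-- Distance from a vertex to a code in the binary Hamming space. -/
noncomputable def distToCode {m : ℕ} (C : Set (Fin m → ZMod 2)) (x : Fin m → ZMod 2) : ℕ :=
  sInf {d | ∃ c ∈ C, hammingDist x c = d}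

/-- `C` has minimum distance `δ`. -/
def IsMinDist {m : ℕ} (C : Set (Fin m → ZMod 2)) (δ : ℕ) : Prop :=
  (∀ x ∈ C, ∀ y ∈ C, x ≠ y → δ ≤ hammingDist x y) ∧
  ∃ x ∈ C, ∃ y ∈ C, x ≠ y ∧ hammingDist x y = δ

/-- `C` is completely regular: the number of codewords at distance `k` from `γ`
depends only on `distToCode C γ` and `k`. -/
def IsCompletelyRegular {m : ℕ} (C : Set (Fin m → ZMod 2)) : Prop :=
  ∀ γ γ' : Fin m → ZMod 2, distToCode C γ = distToCode C γ' →
    ∀ k : ℕ, {c ∈ C | hammingDist γ c = k}.ncard = {c ∈ C | hammingDist γ' c = k}.ncard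

/-!
Identify a binary vector with its support. Around a point at distance at most `δ / 2` from the
origin the distance to the code is its weight, so complete regularity makes sphere counts depend
on that weight only; peeling off the lower weights by induction shows that the codewords of any
fixed weight form a `⌊δ / 2⌋`-design. For length `15` and `δ = 5`, the codewords of weight `5`
thus form a 2-design of some index `l`; it is nonempty because `5` is attained as a distance.
Divisibility makes `l` even and packing gives `3 * l ≤ 13`, so `l` is `2` or `4`.

If `l = 2`, a triple inside a codeword of weight `5` is at distance `2` from the code, so its
sphere counts are those of a pair, while all other triples are at distance `3`. Hence the number of
codewords of weight `6`, and of weight `7`, through a triple takes one value on each kind of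
triple. Counting over all triples, and using that the codewords of weight `7` form a 1-design,
forces every triple of the second kind into at least `9` codewords of weight `7`, whereas packing
allows at most `8`.
-/

section SetFamilies

open Finset
open scoped symmDiff

variable {α : Type*} [DecidableEq α] {𝒟 𝓑 : Finset (Finset α)} {G S T : Finset α} {d k l t δ : ℕ}

/-- The number of blocks of `𝓑` that contain `T`. -/
def blockDegree (𝓑 : Finset (Finset α)) (T : Finset α) : ℕ :=
  #{S ∈ 𝓑 | T ⊆ S}

/-- The number of blocks of `𝓑` that meet `T` in exactly `i` points. -/
def interCount (𝓑 : Finset (Finset α)) (T : Finset α) (i : ℕ) : ℕ :=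
  #{S ∈ 𝓑 | #(T ∩ S) = i}

/-- `𝓑` is a `t`-design of index `l`: every `t`-subset of the points lies in exactly `l` blocks.
The block size is not part of the definition. -/
def IsDesign (𝓑 : Finset (Finset α)) (t l : ℕ) : Prop :=
  ∀ T, #T = t → blockDegree 𝓑 T = l

/-- The members of `𝒟` at Hamming distance `d` from `G`, where a set stands for the binary vector
it supports. -/
def wordsAtDist (𝒟 : Finset (Finset α)) (G : Finset α) (d : ℕ) : Finset (Finset α) :=
  {S ∈ 𝒟 | #(G ∆ S) = d}

/-- The Hamming distance from `G` to the family `𝒟`, with the junk value `0` for `𝒟 = ∅`. -/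
noncomputable def distToFamily (𝒟 : Finset (Finset α)) (G : Finset α) : ℕ :=
  sInf {d | ∃ S ∈ 𝒟, #(G ∆ S) = d}

/-- Complete regularity of a binary code, in terms of the supports of its codewords. -/
def IsRegularFamily (𝒟 : Finset (Finset α)) : Prop :=
  ∀ G G', distToFamily 𝒟 G = distToFamily 𝒟 G' →
    ∀ d, #(wordsAtDist 𝒟 G d) = #(wordsAtDist 𝒟 G' d)

/-- A binary code has minimum distance at least `δ`, in terms of the supports of its codewords. -/
def IsSeparatedFamily (𝒟 : Finset (Finset α)) (δ : ℕ) : Prop :=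
  (𝒟 : Set (Finset α)).Pairwise fun S T => δ ≤ #(S ∆ T)

lemma card_symmDiff_add_two_mul_card_inter (G S : Finset α) :
    #(G ∆ S) + 2 * #(G ∩ S) = #G + #S := by
  have hunion : #(G ∆ S) = #(G \ S) + #(S \ G) :=
    card_union_of_disjoint disjoint_sdiff_sdiff
  have hG := card_sdiff_add_card_inter G S
  have hS := card_sdiff_add_card_inter S G
  rw [Finset.inter_comm S G] at hS
  omega

lemma card_inter_eq_card_left_iff : #(T ∩ S) = #T ↔ T ⊆ S :=
  ⟨fun h => Finset.inter_eq_left.1 (eq_of_subset_of_card_le Finset.inter_subset_left h.ge),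
    fun h => by rw [Finset.inter_eq_left.2 h]⟩

lemma interCount_card (𝓑 : Finset (Finset α)) (T : Finset α) :
    interCount 𝓑 T #T = blockDegree 𝓑 T := by
  simp only [interCount, blockDegree, card_inter_eq_card_left_iff]

lemma sum_powersetCard_blockDegree (𝓑 : Finset (Finset α)) (T : Finset α) (j : ℕ) :
    ∑ I ∈ powersetCard j T, blockDegree 𝓑 I = ∑ S ∈ 𝓑, (#(T ∩ S)).choose j := by
  have hswap : ∑ I ∈ powersetCard j T, blockDegree 𝓑 I =
      ∑ S ∈ 𝓑, #{I ∈ powersetCard j T | I ⊆ S} :=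
    sum_card_bipartiteAbove_eq_sum_card_bipartiteBelow fun I S : Finset α => I ⊆ S
  rw [hswap]
  refine sum_congr rfl fun S _ => ?_
  rw [← card_powersetCard]
  congr 1
  ext I
  simp only [mem_filter, mem_powersetCard, Finset.subset_inter_iff]
  tauto

lemma sum_interCount_mul_choose (𝓑 : Finset (Finset α)) (T : Finset α) (j : ℕ) :
    ∑ i ∈ range (#T + 1), interCount 𝓑 T i * i.choose j =
      ∑ I ∈ powersetCard j T, blockDegree 𝓑 I := by
  have hmaps : ∀ S ∈ 𝓑, #(T ∩ S) ∈ range (#T + 1) := fun S _ =>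
    mem_range_succ_iff.2 (card_le_card Finset.inter_subset_left)
  rw [sum_powersetCard_blockDegree, ← sum_fiberwise_of_maps_to hmaps]
  exact sum_congr rfl fun i _ => (sum_eq_card_nsmul fun S hS => by rw [(mem_filter.1 hS).2]).symm

lemma IsDesign.sum_powersetCard_blockDegree (h𝓑 : IsDesign 𝓑 t l) (U : Finset α) :
    ∑ I ∈ powersetCard t U, blockDegree 𝓑 I = (#U).choose t * l := by
  rw [sum_eq_card_nsmul fun I hI => h𝓑 I (mem_powersetCard.1 hI).2, card_powersetCard, smul_eq_mul]

lemma sum_blockDegree_of_sized [Fintype α] (hk : (𝓑 : Set (Finset α)).Sized k) (t : ℕ) :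
    ∑ I ∈ powersetCard t Finset.univ, blockDegree 𝓑 I = #𝓑 * k.choose t := by
  rw [sum_powersetCard_blockDegree]
  exact sum_eq_card_nsmul fun S hS => by rw [Finset.univ_inter, hk hS]

lemma IsDesign.card_mul_choose [Fintype α] (h𝓑 : IsDesign 𝓑 t l)
    (hk : (𝓑 : Set (Finset α)).Sized k) :
    (Fintype.card α).choose t * l = #𝓑 * k.choose t :=
  (h𝓑.sum_powersetCard_blockDegree Finset.univ).symm.trans (sum_blockDegree_of_sized hk t)

lemma exists_blockDegree_eq_zero [Fintype α] (hk : (𝓑 : Set (Finset α)).Sized k)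
    (hlt : #𝓑 * k.choose t < (Fintype.card α).choose t) :
    ∃ G : Finset α, #G = t ∧ blockDegree 𝓑 G = 0 := by
  by_contra! hcov
  refine hlt.not_ge ?_
  rw [← sum_blockDegree_of_sized hk, ← Finset.card_univ, ← card_powersetCard, card_eq_sum_ones]
  exact sum_le_sum fun G hG => Nat.one_le_iff_ne_zero.2 (hcov G (mem_powersetCard.1 hG).2)

lemma eq_of_sum_range_mul_choose_eq {x y : ℕ → ℕ} {n : ℕ}
    (h : ∀ j < n, ∑ i ∈ range n, x i * i.choose j = ∑ i ∈ range n, y i * i.choose j) :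
    ∀ i < n, x i = y i := by
  induction n with
  | zero => simp
  | succ n ih =>
    have hlow (z : ℕ → ℕ) : ∑ i ∈ range n, z i * i.choose n = 0 :=
      sum_eq_zero fun i hi => by rw [Nat.choose_eq_zero_of_lt (Finset.mem_range.1 hi), mul_zero]
    have htop : x n = y n := by simpa [sum_range_succ, hlow] using h n n.lt_succ_self
    intro i hi
    rcases Nat.lt_succ_iff_lt_or_eq.1 hi with hi | rfl
    · refine ih (fun j hj => ?_) i hi
      simpa [sum_range_succ, htop] using h j (hj.trans n.lt_succ_self)
    · exact htop

lemma interCount_congr {T' : Finset α} (hcard : #T = #T')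
    (hdeg : ∀ I J : Finset α, #I = #J → #I ≤ #T → blockDegree 𝓑 I = blockDegree 𝓑 J) {i : ℕ}
    (hi : i ≤ #T) : interCount 𝓑 T i = interCount 𝓑 T' i := by
  refine eq_of_sum_range_mul_choose_eq (n := #T + 1) (fun j hj => ?_) i (by omega)
  obtain ⟨I₀, -, hI₀⟩ := exists_subset_card_eq (Nat.le_of_lt_succ hj)
  have hsum (U : Finset α) :
      ∑ I ∈ powersetCard j U, blockDegree 𝓑 I = (#U).choose j * blockDegree 𝓑 I₀ := by
    refine IsDesign.sum_powersetCard_blockDegree (fun I hI => ?_) U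
    exact hdeg I I₀ (by omega) (by omega)
  rw [sum_interCount_mul_choose, hsum, hcard, sum_interCount_mul_choose, hsum]

lemma sum_choose_card_le_choose_card {ι : Type*} {s : Finset ι} {g : ι → Finset α} {U : Finset α}
    {j : ℕ} (hU : ∀ a ∈ s, g a ⊆ U) (hinter : (s : Set ι).Pairwise fun a b => #(g a ∩ g b) < j) :
    ∑ a ∈ s, (#(g a)).choose j ≤ (#U).choose j := by
  have hdisj : (s : Set ι).PairwiseDisjoint fun a => powersetCard j (g a) := by
    intro a ha b hb hab
    refine disjoint_left.2 fun X hXa hXb => (hinter ha hb hab).not_ge ?_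
    rw [mem_powersetCard] at hXa hXb
    exact hXa.2 ▸ card_le_card (subset_inter hXa.1 hXb.1)
  simp only [← card_powersetCard]
  rw [← card_biUnion hdisj]
  exact card_le_card (biUnion_subset.2 fun a ha => powersetCard_mono (hU a ha))

lemma sum_wordsAtDist_card_inter (hG : #G ≤ d) (f : ℕ → ℕ) :
    ∑ S ∈ wordsAtDist 𝒟 G d, f #(G ∩ S) =
      ∑ i ∈ range (#G + 1), interCount (𝒟 # (d + 2 * i - #G)) G i * f i := by
  have hmaps : ∀ S ∈ wordsAtDist 𝒟 G d, #(G ∩ S) ∈ range (#G + 1) := fun S _ =>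
    mem_range_succ_iff.2 (card_le_card Finset.inter_subset_left)
  rw [← sum_fiberwise_of_maps_to hmaps]
  refine sum_congr rfl fun i _ => ?_
  have hfiber : {S ∈ wordsAtDist 𝒟 G d | #(G ∩ S) = i} =
      {S ∈ 𝒟 # (d + 2 * i - #G) | #(G ∩ S) = i} := by
    ext S
    have := card_symmDiff_add_two_mul_card_inter G S
    simp only [wordsAtDist, mem_filter, mem_slice, and_assoc]
    refine and_congr_right fun _ => ?_
    omega
  rw [hfiber]
  exact sum_eq_card_nsmul fun S hS => by rw [(mem_filter.1 hS).2]

lemma card_wordsAtDist (hG : #G ≤ d) :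
    #(wordsAtDist 𝒟 G d) =
      ∑ i ∈ range (#G + 1), interCount (𝒟 # (d + 2 * i - #G)) G i := by
  simpa using sum_wordsAtDist_card_inter (𝒟 := 𝒟) hG fun _ => 1

lemma wordsAtDist_empty (𝒟 : Finset (Finset α)) (k : ℕ) : wordsAtDist 𝒟 ∅ k = 𝒟 # k := by
  ext S
  simp only [wordsAtDist, mem_filter, mem_slice, ← Finset.bot_eq_empty, bot_symmDiff]

lemma distToFamily_eq_of_isLeast (h : IsLeast {d | ∃ S ∈ 𝒟, #(G ∆ S) = d} d) :
    distToFamily 𝒟 G = d :=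
  h.csInf_eq

lemma distToFamily_eq_zero (hG : G ∈ 𝒟) : distToFamily 𝒟 G = 0 :=
  Nat.sInf_eq_zero.2 (Or.inl ⟨G, hG, by simp⟩)

lemma distToFamily_eq_card (h0 : ∅ ∈ 𝒟) (h : ∀ S ∈ 𝒟, 2 * #(G ∩ S) ≤ #S) :
    distToFamily 𝒟 G = #G := by
  refine distToFamily_eq_of_isLeast ⟨⟨∅, h0, ?_⟩, ?_⟩
  · rw [← Finset.bot_eq_empty, symmDiff_bot]
  · rintro _ ⟨S, hS, rfl⟩
    have := card_symmDiff_add_two_mul_card_inter G S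
    have := h S hS
    omega

lemma IsRegularFamily.slice_nonempty (hreg : IsRegularFamily 𝒟) (h0 : ∅ ∈ 𝒟)
    (h : ∃ S ∈ 𝒟, ∃ T ∈ 𝒟, #(S ∆ T) = k) : (𝒟 # k).Nonempty := by
  obtain ⟨S, hS, T, hT, hST⟩ := h
  have hdist : distToFamily 𝒟 S = distToFamily 𝒟 ∅ := by
    rw [distToFamily_eq_zero hS, distToFamily_eq_zero h0]
  rw [← card_pos, ← wordsAtDist_empty, ← hreg S ∅ hdist]
  exact card_pos.2 ⟨T, mem_filter.2 ⟨hT, hST⟩⟩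

namespace IsSeparatedFamily

lemma two_mul_card_inter_add_le (hsep : IsSeparatedFamily 𝒟 δ) (hS : S ∈ 𝒟) (hT : T ∈ 𝒟)
    (hne : S ≠ T) (G : Finset α) :
    2 * #((G ∆ S) ∩ (G ∆ T)) + δ ≤ #(G ∆ S) + #(G ∆ T) := by
  have hcancel : (G ∆ S) ∆ (G ∆ T) = S ∆ T := by
    rw [symmDiff_comm G S, symmDiff_assoc, symmDiff_symmDiff_cancel_left]
  have := card_symmDiff_add_two_mul_card_inter (G ∆ S) (G ∆ T)
  rw [hcancel] at this
  have := hsep hS hT hne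
  omega

lemma card_eq_zero_or_le_card (hsep : IsSeparatedFamily 𝒟 δ) (h0 : ∅ ∈ 𝒟) (hS : S ∈ 𝒟) :
    #S = 0 ∨ δ ≤ #S := by
  rw [card_eq_zero, or_iff_not_imp_left]
  intro hne
  simpa only [← Finset.bot_eq_empty, symmDiff_bot] using hsep hS h0 hne

lemma slice_eq_empty (hsep : IsSeparatedFamily 𝒟 δ) (h0 : ∅ ∈ 𝒟) (hk : k ≠ 0) (hkδ : k < δ) :
    𝒟 # k = ∅ := by
  refine eq_empty_of_forall_notMem fun S hS => ?_
  have ⟨hS, hcard⟩ := mem_slice.1 hS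
  have := hsep.card_eq_zero_or_le_card h0 hS
  omega

lemma distToFamily_eq_card (hsep : IsSeparatedFamily 𝒟 δ) (h0 : ∅ ∈ 𝒟) (hT : 2 * #T ≤ δ) :
    distToFamily 𝒟 T = #T := by
  refine _root_.distToFamily_eq_card h0 fun S hS => ?_
  have := hsep.card_eq_zero_or_le_card h0 hS
  have : #(T ∩ S) ≤ #T := card_le_card Finset.inter_subset_left
  have : #(T ∩ S) ≤ #S := card_le_card Finset.inter_subset_right
  omega

lemma distToFamily_eq_card_of_blockDegree_eq_zero (hsep : IsSeparatedFamily 𝒟 δ) (h0 : ∅ ∈ 𝒟)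
    (hG : 2 * #G ≤ δ + 1) (hdeg : blockDegree (𝒟 # δ) G = 0) : distToFamily 𝒟 G = #G := by
  refine _root_.distToFamily_eq_card h0 fun S hS => ?_
  have := hsep.card_eq_zero_or_le_card h0 hS
  have hle : #(G ∩ S) ≤ #G := card_le_card Finset.inter_subset_left
  have : #(G ∩ S) ≤ #S := card_le_card Finset.inter_subset_right
  have hlt (hSδ : #S = δ) : #(G ∩ S) < #G := by
    refine hle.lt_of_ne fun heq => ?_
    have hmem : S ∈ ({S ∈ 𝒟 # δ | G ⊆ S} : Finset _) :=
      mem_filter.2 ⟨mem_slice.2 ⟨hS, hSδ⟩, card_inter_eq_card_left_iff.1 heq⟩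
    exact (card_pos.2 ⟨S, hmem⟩).ne' hdeg
  omega

lemma distToFamily_eq_sub_card_of_blockDegree_ne_zero (hsep : IsSeparatedFamily 𝒟 δ) (h0 : ∅ ∈ 𝒟)
    (hG : δ ≤ 2 * #G) (hdeg : blockDegree (𝒟 # δ) G ≠ 0) : distToFamily 𝒟 G = δ - #G := by
  obtain ⟨S, hS⟩ := card_ne_zero.1 hdeg
  obtain ⟨⟨hS, hSδ⟩, hGS⟩ : (S ∈ 𝒟 ∧ #S = δ) ∧ G ⊆ S := by
    simpa only [mem_filter, mem_slice] using hS
  refine distToFamily_eq_of_isLeast ⟨⟨S, hS, ?_⟩, ?_⟩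
  · have := card_symmDiff_add_two_mul_card_inter G S
    have := card_inter_eq_card_left_iff.2 hGS
    omega
  · rintro _ ⟨S', hS', rfl⟩
    have := card_symmDiff_add_two_mul_card_inter G S'
    have := hsep.card_eq_zero_or_le_card h0 hS'
    have : #(G ∩ S') ≤ #G := card_le_card Finset.inter_subset_left
    have : #(G ∩ S') ≤ #S' := card_le_card Finset.inter_subset_right
    omega

lemma blockDegree_slice_le_one (hsep : IsSeparatedFamily 𝒟 δ) (hk : 2 * k < δ + 2 * #G) :
    blockDegree (𝒟 # k) G ≤ 1 := by
  refine card_le_one.2 fun S hS T hT => by_contra fun hne => ?_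
  simp only [mem_filter, mem_slice] at hS hT
  have hsmall := hsep.two_mul_card_inter_add_le hS.1.1 hT.1.1 hne ∅
  simp only [← Finset.bot_eq_empty, bot_symmDiff] at hsmall
  have := card_le_card (subset_inter hS.2 hT.2)
  omega

lemma sum_interCount_mul_choose_le [Fintype α] (hsep : IsSeparatedFamily 𝒟 δ) {j : ℕ}
    (hG : #G ≤ d) (hd : 2 * d < δ + 2 * j) :
    ∑ i ∈ range (#G + 1), interCount (𝒟 # (d + 2 * i - #G)) G i * (d + i - #G).choose j ≤
      (Fintype.card α - #G).choose j := by
  have hcard : ∀ S ∈ wordsAtDist 𝒟 G d, #(S \ G) = d + #(G ∩ S) - #G := fun S hS => by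
    have := card_symmDiff_add_two_mul_card_inter G S
    have := card_sdiff_add_card_inter S G
    rw [Finset.inter_comm] at this
    have := (mem_filter.1 hS).2
    omega
  calc _ = ∑ S ∈ wordsAtDist 𝒟 G d, (d + #(G ∩ S) - #G).choose j :=
        (sum_wordsAtDist_card_inter hG fun i => (d + i - #G).choose j).symm
    _ = ∑ S ∈ wordsAtDist 𝒟 G d, (#(S \ G)).choose j :=
        sum_congr rfl fun S hS => by rw [hcard S hS]
    _ ≤ (#Gᶜ).choose j := by
        refine sum_choose_card_le_choose_card (fun S _ x hx => mem_compl.2 (mem_sdiff.1 hx).2) ?_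
        intro S hS T hT hne
        obtain ⟨hS, hSd⟩ := mem_filter.1 hS
        obtain ⟨hT, hTd⟩ := mem_filter.1 hT
        have := hsep.two_mul_card_inter_add_le hS hT hne G
        have hle : #((S \ G) ∩ (T \ G)) ≤ #((G ∆ S) ∩ (G ∆ T)) :=
          card_le_card (inter_subset_inter le_sup_right le_sup_right)
        omega
    _ = _ := by rw [card_compl]

end IsSeparatedFamily

namespace IsRegularFamily

lemma blockDegree_slice_congr (hreg : IsRegularFamily 𝒟) (hsep : IsSeparatedFamily 𝒟 δ)
    (h0 : ∅ ∈ 𝒟) {T' : Finset α} (hcard : #T = #T') (hT : 2 * #T ≤ δ) :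
    blockDegree (𝒟 # k) T = blockDegree (𝒟 # k) T' := by
  induction k using Nat.strong_induction_on generalizing T T' with
  | h k ih =>
    rcases le_or_gt (2 * #T) k with hk | hk
    · have hwords : #(wordsAtDist 𝒟 T (k - #T)) = #(wordsAtDist 𝒟 T' (k - #T)) :=
        hreg T T' (by rw [hsep.distToFamily_eq_card h0 hT,
          hsep.distToFamily_eq_card h0 (hcard ▸ hT), hcard]) _
      have hlower : ∀ i ∈ range #T, interCount (𝒟 # (k - #T + 2 * i - #T)) T i =
          interCount (𝒟 # (k - #T + 2 * i - #T)) T' i := fun i hi => by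
        rw [Finset.mem_range] at hi
        exact interCount_congr hcard (fun I J hIJ hI => ih _ (by omega) hIJ (by omega)) hi.le
      rw [card_wordsAtDist (by omega), card_wordsAtDist (by omega), ← hcard, sum_range_succ,
        sum_range_succ, sum_congr rfl hlower, add_right_inj,
        show k - #T + 2 * #T - #T = k by omega] at hwords
      rwa [← interCount_card, ← interCount_card, ← hcard]
    · have hzero (U : Finset α) (hU : #U = #T) : blockDegree (𝒟 # k) U = 0 := by
        refine card_eq_zero.2 (filter_eq_empty_iff.2 fun S hS hUS => ?_)
        obtain ⟨hS, hSk⟩ := mem_slice.1 hS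
        have := hsep.card_eq_zero_or_le_card h0 hS
        have := Finset.card_le_card hUS
        omega
      rw [hzero T rfl, hzero T' hcard.symm]

theorem exists_isDesign_slice (hreg : IsRegularFamily 𝒟) (hsep : IsSeparatedFamily 𝒟 δ)
    (h0 : ∅ ∈ 𝒟) (ht : 2 * t ≤ δ) (k : ℕ) : ∃ l, IsDesign (𝒟 # k) t l := by
  by_cases hT : ∃ T₀ : Finset α, #T₀ = t
  · obtain ⟨T₀, rfl⟩ := hT
    exact ⟨blockDegree (𝒟 # k) T₀, fun T hT =>
      hreg.blockDegree_slice_congr hsep h0 hT (by omega)⟩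
  · exact ⟨0, fun T hTt => (hT ⟨T, hTt⟩).elim⟩

end IsRegularFamily

lemma interCount_empty (T : Finset α) (i : ℕ) : interCount ∅ T i = 0 := by
  simp only [interCount, filter_empty, Finset.card_empty]

lemma interCount_slice_zero (h0 : ∅ ∈ 𝒟) (T : Finset α) : interCount (𝒟 # 0) T 0 = 1 := by
  have hslice : 𝒟 # 0 = {∅} := by
    exact_mod_cast sized_slice.empty_mem_iff.1 (mem_coe.2 (mem_slice.2 ⟨h0, Finset.card_empty⟩))
  rw [hslice, interCount, filter_singleton, Finset.inter_empty, if_pos Finset.card_empty,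
    Finset.card_singleton]

lemma IsDesign.interCount_two_add (h𝓑 : IsDesign 𝓑 2 l) (hG : #G = 3) :
    interCount 𝓑 G 2 + 3 * blockDegree 𝓑 G = 3 * l := by
  have hcount := (sum_interCount_mul_choose 𝓑 G 2).trans (h𝓑.sum_powersetCard_blockDegree G)
  rw [← interCount_card, hG]
  simpa [hG, sum_range_succ, mul_comm 3 (interCount 𝓑 G 3)] using hcount

lemma sum_blockDegree_of_dichotomy [Fintype α] {𝓑' : Finset (Finset α)} {k' a b : ℕ}
    (hk : (𝓑 : Set (Finset α)).Sized k) (hk' : (𝓑' : Set (Finset α)).Sized k')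
    (h : ∀ G, #G = t → (blockDegree 𝓑 G = 1 ∧ blockDegree 𝓑' G = a) ∨
      (blockDegree 𝓑 G = 0 ∧ blockDegree 𝓑' G = b)) :
    #𝓑' * k'.choose t + #𝓑 * k.choose t * b =
      #𝓑 * k.choose t * a + (Fintype.card α).choose t * b := by
  have hpoint : ∀ G ∈ powersetCard t (Finset.univ : Finset α),
      blockDegree 𝓑' G + blockDegree 𝓑 G * b = blockDegree 𝓑 G * a + b := fun G hG => by
    rcases h G (mem_powersetCard.1 hG).2 with ⟨h𝓑, h𝓑'⟩ | ⟨h𝓑, h𝓑'⟩ <;> rw [h𝓑, h𝓑'] <;> ring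
  simpa only [sum_add_distrib, ← Finset.sum_mul, sum_blockDegree_of_sized hk,
    sum_blockDegree_of_sized hk', sum_const, card_powersetCard, Finset.card_univ, smul_eq_mul]
    using sum_congr rfl hpoint

lemma card_wordsAtDist_three_of_card_eq_two (hsep : IsSeparatedFamily 𝒟 5) (h0 : ∅ ∈ 𝒟)
    (hT : #T = 2) : #(wordsAtDist 𝒟 T 3) = blockDegree (𝒟 # 5) T := by
  rw [card_wordsAtDist (by omega), ← interCount_card, hT]
  simp [sum_range_succ, interCount_empty, hsep.slice_eq_empty h0]

lemma card_wordsAtDist_four_of_card_eq_two (hsep : IsSeparatedFamily 𝒟 5) (h0 : ∅ ∈ 𝒟)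
    (hT : #T = 2) : #(wordsAtDist 𝒟 T 4) = blockDegree (𝒟 # 6) T := by
  rw [card_wordsAtDist (by omega), ← interCount_card, hT]
  simp [sum_range_succ, interCount_empty, hsep.slice_eq_empty h0]

lemma card_wordsAtDist_three_of_card_eq_three (hsep : IsSeparatedFamily 𝒟 5) (h0 : ∅ ∈ 𝒟)
    (hG : #G = 3) : #(wordsAtDist 𝒟 G 3) = 1 + blockDegree (𝒟 # 6) G := by
  rw [card_wordsAtDist (by omega), ← interCount_card, hG]
  simp [sum_range_succ, interCount_empty, interCount_slice_zero h0, hsep.slice_eq_empty h0]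

lemma card_wordsAtDist_four_of_card_eq_three (hsep : IsSeparatedFamily 𝒟 5) (h0 : ∅ ∈ 𝒟)
    (hG : #G = 3) : #(wordsAtDist 𝒟 G 4) = interCount (𝒟 # 5) G 2 + blockDegree (𝒟 # 7) G := by
  rw [card_wordsAtDist (by omega), ← interCount_card, hG]
  simp [sum_range_succ, interCount_empty, hsep.slice_eq_empty h0]

lemma IsDesign.index_mul_three_le [Fintype α] (hsep : IsSeparatedFamily 𝒟 5) (h0 : ∅ ∈ 𝒟)
    (h5 : IsDesign (𝒟 # 5) 2 l) (hα : 2 ≤ Fintype.card α) : l * 3 ≤ Fintype.card α - 2 := by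
  obtain ⟨T, -, hT⟩ := exists_subset_card_eq (s := (Finset.univ : Finset α)) hα
  have hpack := hsep.sum_interCount_mul_choose_le (G := T) (d := 3) (j := 1)
    (by omega) (by omega)
  rw [← h5 T hT, ← interCount_card, hT]
  simpa [hT, sum_range_succ, interCount_empty, hsep.slice_eq_empty h0] using hpack

lemma blockDegree_six_mul_three_le [Fintype α] (hsep : IsSeparatedFamily 𝒟 5) (h0 : ∅ ∈ 𝒟)
    (hG : #G = 3) : blockDegree (𝒟 # 6) G * 3 ≤ Fintype.card α - 3 := by
  have hpack := hsep.sum_interCount_mul_choose_le (G := G) (d := 3) (j := 1)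
    (by omega) (by omega)
  rw [← interCount_card, hG]
  simpa [hG, sum_range_succ, interCount_empty, hsep.slice_eq_empty h0] using hpack

lemma interCount_five_mul_three_add_blockDegree_seven_mul_six_le [Fintype α]
    (hsep : IsSeparatedFamily 𝒟 5) (h0 : ∅ ∈ 𝒟) (hG : #G = 3) :
    interCount (𝒟 # 5) G 2 * 3 + blockDegree (𝒟 # 7) G * 6 ≤ (Fintype.card α - 3).choose 2 := by
  have hpack := hsep.sum_interCount_mul_choose_le (G := G) (d := 4) (j := 2)
    (by omega) (by omega)
  rw [← interCount_card, hG]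
  simpa [hG, sum_range_succ, interCount_empty, hsep.slice_eq_empty h0,
    show Nat.choose 4 2 = 6 from rfl] using hpack

lemma card_wordsAtDist_eq_of_blockDegree_five_ne_zero (hsep : IsSeparatedFamily 𝒟 5) (h0 : ∅ ∈ 𝒟)
    (hreg : IsRegularFamily 𝒟) (hG : #G = 3) (hcov : blockDegree (𝒟 # 5) G ≠ 0) (hT : #T = 2)
    (d : ℕ) : #(wordsAtDist 𝒟 G d) = #(wordsAtDist 𝒟 T d) := by
  refine hreg G T ?_ d
  rw [hsep.distToFamily_eq_sub_card_of_blockDegree_ne_zero h0 (by omega) hcov,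
    hsep.distToFamily_eq_card h0 (by omega), hG, hT]

lemma one_add_blockDegree_six_of_blockDegree_five_ne_zero (hsep : IsSeparatedFamily 𝒟 5)
    (h0 : ∅ ∈ 𝒟) (hreg : IsRegularFamily 𝒟) (h5 : IsDesign (𝒟 # 5) 2 l) (hG : #G = 3)
    (hcov : blockDegree (𝒟 # 5) G ≠ 0) : 1 + blockDegree (𝒟 # 6) G = l := by
  obtain ⟨T, -, hT⟩ := exists_subset_card_eq (s := G) (n := 2) (by omega)
  rw [← card_wordsAtDist_three_of_card_eq_three hsep h0 hG,
    card_wordsAtDist_eq_of_blockDegree_five_ne_zero hsep h0 hreg hG hcov hT,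
    card_wordsAtDist_three_of_card_eq_two hsep h0 hT, h5 T hT]

lemma interCount_five_add_blockDegree_seven_of_blockDegree_five_ne_zero
    (hsep : IsSeparatedFamily 𝒟 5) (h0 : ∅ ∈ 𝒟) (hreg : IsRegularFamily 𝒟)
    (h6 : IsDesign (𝒟 # 6) 2 l) (hG : #G = 3) (hcov : blockDegree (𝒟 # 5) G ≠ 0) :
    interCount (𝒟 # 5) G 2 + blockDegree (𝒟 # 7) G = l := by
  obtain ⟨T, -, hT⟩ := exists_subset_card_eq (s := G) (n := 2) (by omega)
  rw [← card_wordsAtDist_four_of_card_eq_three hsep h0 hG,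
    card_wordsAtDist_eq_of_blockDegree_five_ne_zero hsep h0 hreg hG hcov hT,
    card_wordsAtDist_four_of_card_eq_two hsep h0 hT, h6 T hT]

lemma card_wordsAtDist_congr_of_blockDegree_five_eq_zero (hsep : IsSeparatedFamily 𝒟 5)
    (h0 : ∅ ∈ 𝒟) (hreg : IsRegularFamily 𝒟) {G' : Finset α} (hG : #G = 3) (hG' : #G' = 3)
    (hunc : blockDegree (𝒟 # 5) G = 0) (hunc' : blockDegree (𝒟 # 5) G' = 0) (d : ℕ) :
    #(wordsAtDist 𝒟 G d) = #(wordsAtDist 𝒟 G' d) := by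
  refine hreg G G' ?_ d
  rw [hsep.distToFamily_eq_card_of_blockDegree_eq_zero h0 (by omega) hunc,
    hsep.distToFamily_eq_card_of_blockDegree_eq_zero h0 (by omega) hunc', hG, hG']

lemma blockDegree_six_congr_of_blockDegree_five_eq_zero (hsep : IsSeparatedFamily 𝒟 5) (h0 : ∅ ∈ 𝒟)
    (hreg : IsRegularFamily 𝒟) {G' : Finset α} (hG : #G = 3) (hG' : #G' = 3)
    (hunc : blockDegree (𝒟 # 5) G = 0) (hunc' : blockDegree (𝒟 # 5) G' = 0) :
    blockDegree (𝒟 # 6) G = blockDegree (𝒟 # 6) G' := by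
  have hwords :=
    card_wordsAtDist_congr_of_blockDegree_five_eq_zero hsep h0 hreg hG hG' hunc hunc' 3
  rwa [card_wordsAtDist_three_of_card_eq_three hsep h0 hG,
    card_wordsAtDist_three_of_card_eq_three hsep h0 hG', add_right_inj] at hwords

lemma blockDegree_seven_congr_of_blockDegree_five_eq_zero (hsep : IsSeparatedFamily 𝒟 5)
    (h0 : ∅ ∈ 𝒟) (hreg : IsRegularFamily 𝒟) (h5 : IsDesign (𝒟 # 5) 2 l) {G' : Finset α}
    (hG : #G = 3) (hG' : #G' = 3) (hunc : blockDegree (𝒟 # 5) G = 0)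
    (hunc' : blockDegree (𝒟 # 5) G' = 0) : blockDegree (𝒟 # 7) G = blockDegree (𝒟 # 7) G' := by
  have hwords :=
    card_wordsAtDist_congr_of_blockDegree_five_eq_zero hsep h0 hreg hG hG' hunc hunc' 4
  rw [card_wordsAtDist_four_of_card_eq_three hsep h0 hG,
    card_wordsAtDist_four_of_card_eq_three hsep h0 hG'] at hwords
  have := h5.interCount_two_add hG
  have := h5.interCount_two_add hG'
  omega

lemma card_slice_six_mul_twenty_add [Fintype α] (hsep : IsSeparatedFamily 𝒟 5) (h0 : ∅ ∈ 𝒟)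
    (hreg : IsRegularFamily 𝒟) (h5 : IsDesign (𝒟 # 5) 2 l) (hG : #G = 3)
    (hunc : blockDegree (𝒟 # 5) G = 0) :
    #(𝒟 # 6) * 20 + #(𝒟 # 5) * 10 * blockDegree (𝒟 # 6) G =
      #(𝒟 # 5) * 10 * (l - 1) + (Fintype.card α).choose 3 * blockDegree (𝒟 # 6) G := by
  refine sum_blockDegree_of_dichotomy (t := 3) sized_slice sized_slice fun G' hG' => ?_
  have hle : blockDegree (𝒟 # 5) G' ≤ 1 := hsep.blockDegree_slice_le_one (by omega)
  rcases Nat.le_one_iff_eq_zero_or_eq_one.1 hle with hunc' | hcov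
  · exact Or.inr ⟨hunc', blockDegree_six_congr_of_blockDegree_five_eq_zero hsep h0 hreg
      hG' hG hunc' hunc⟩
  · have := one_add_blockDegree_six_of_blockDegree_five_ne_zero hsep h0 hreg h5 hG' (by omega)
    exact Or.inl ⟨hcov, by omega⟩

lemma card_slice_seven_mul_thirty_five_add [Fintype α] (hsep : IsSeparatedFamily 𝒟 5) (h0 : ∅ ∈ 𝒟)
    (hreg : IsRegularFamily 𝒟) {m : ℕ} (h5 : IsDesign (𝒟 # 5) 2 l) (h6 : IsDesign (𝒟 # 6) 2 m)
    (hG : #G = 3) (hunc : blockDegree (𝒟 # 5) G = 0) :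
    #(𝒟 # 7) * 35 + #(𝒟 # 5) * 10 * blockDegree (𝒟 # 7) G =
      #(𝒟 # 5) * 10 * (m + 3 - 3 * l) + (Fintype.card α).choose 3 * blockDegree (𝒟 # 7) G := by
  refine sum_blockDegree_of_dichotomy (t := 3) sized_slice sized_slice fun G' hG' => ?_
  have hle : blockDegree (𝒟 # 5) G' ≤ 1 := hsep.blockDegree_slice_le_one (by omega)
  rcases Nat.le_one_iff_eq_zero_or_eq_one.1 hle with hunc' | hcov
  · exact Or.inr ⟨hunc', blockDegree_seven_congr_of_blockDegree_five_eq_zero hsep h0 hreg h5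
      hG' hG hunc' hunc⟩
  · have := interCount_five_add_blockDegree_seven_of_blockDegree_five_ne_zero hsep h0 hreg h6
      hG' (by omega)
    have := h5.interCount_two_add hG'
    exact Or.inl ⟨hcov, by omega⟩

theorem not_isDesign_slice_five_two [Fintype α] (hsep : IsSeparatedFamily 𝒟 5) (h0 : ∅ ∈ 𝒟)
    (hreg : IsRegularFamily 𝒟) (hα : Fintype.card α = 15) : ¬ IsDesign (𝒟 # 5) 2 2 := by
  intro h5
  obtain ⟨m, h6⟩ := hreg.exists_isDesign_slice hsep h0 (t := 2) (by omega) 6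
  obtain ⟨r, h7⟩ := hreg.exists_isDesign_slice hsep h0 (t := 1) (by omega) 7
  have hcard5 : 105 * 2 = #(𝒟 # 5) * 10 := by
    simpa [hα, Nat.choose] using h5.card_mul_choose sized_slice
  have hcard6 : 105 * m = #(𝒟 # 6) * 15 := by
    simpa [hα, Nat.choose] using h6.card_mul_choose sized_slice
  have hcard7 : 15 * r = #(𝒟 # 7) * 7 := by
    simpa [hα, Nat.choose] using h7.card_mul_choose sized_slice
  have htriples : (Fintype.card α).choose 3 = 455 := by rw [hα]; rfl
  have hfew : #(𝒟 # 5) * Nat.choose 5 3 < (Fintype.card α).choose 3 := by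
    rw [htriples, show Nat.choose 5 3 = 10 from rfl]
    omega
  obtain ⟨G, hG, hunc⟩ := exists_blockDegree_eq_zero sized_slice hfew
  have hcount6 := card_slice_six_mul_twenty_add hsep h0 hreg h5 hG hunc
  have hcount7 := card_slice_seven_mul_thirty_five_add hsep h0 hreg h5 h6 hG hunc
  have hpack6 : blockDegree (𝒟 # 6) G * 3 ≤ 12 := by
    simpa [hα, Nat.choose] using blockDegree_six_mul_three_le hsep h0 hG
  have hpack7 : interCount (𝒟 # 5) G 2 * 3 + blockDegree (𝒟 # 7) G * 6 ≤ 66 := by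
    simpa [hα, Nat.choose] using
      interCount_five_mul_three_add_blockDegree_seven_mul_six_le hsep h0 hG
  have hmeet : interCount (𝒟 # 5) G 2 = 6 := by
    simpa only [hunc, mul_zero, add_zero] using h5.interCount_two_add hG
  have hcard5_eq : #(𝒟 # 5) = 21 := by omega
  rw [hcard5_eq, htriples] at hcount6 hcount7
  have : blockDegree (𝒟 # 6) G = 2 := by omega
  have hmod : blockDegree (𝒟 # 7) G % 15 = 9 := by omega
  omega

theorem IsRegularFamily.isDesign_slice_five [Fintype α] (hreg : IsRegularFamily 𝒟)
    (hsep : IsSeparatedFamily 𝒟 5) (h0 : ∅ ∈ 𝒟) (hα : Fintype.card α = 15)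
    (hne : (𝒟 # 5).Nonempty) : IsDesign (𝒟 # 5) 2 4 := by
  obtain ⟨l, h5⟩ := hreg.exists_isDesign_slice hsep h0 (t := 2) (by omega) 5
  have hcard : 105 * l = #(𝒟 # 5) * 10 := by
    simpa [hα, Nat.choose] using h5.card_mul_choose sized_slice
  have hpos : 0 < #(𝒟 # 5) := hne.card_pos
  have hpack := h5.index_mul_three_le hsep h0 (by omega)
  have hl : l ≠ 2 := by
    rintro rfl
    exact not_isDesign_slice_five_two hsep h0 hreg hα h5
  obtain rfl : l = 4 := by omega
  exact h5

end SetFamilies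

section Supports

open Finset
open scoped symmDiff

variable {m : ℕ}

/-- Binary vectors correspond to subsets of the coordinates through their supports. -/
def supportEquiv (m : ℕ) : (Fin m → ZMod 2) ≃ Finset (Fin m) where
  toFun x := {i | x i ≠ 0}
  invFun S i := if i ∈ S then 1 else 0
  left_inv x := by
    ext i
    have hbit (a : ZMod 2) : (if a ≠ 0 then 1 else 0) = a := by revert a; decide
    simp [hbit]
  right_inv S := by ext i; simp

/-- The supports of the codewords of `C`. -/
noncomputable def supportFamily (C : Set (Fin m → ZMod 2)) : Finset (Finset (Fin m)) :=
  C.toFinite.toFinset.map (supportEquiv m).toEmbedding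

variable {C : Set (Fin m → ZMod 2)}

lemma mem_supportEquiv {x : Fin m → ZMod 2} {i : Fin m} : i ∈ supportEquiv m x ↔ x i ≠ 0 := by
  simp [supportEquiv]

lemma card_supportEquiv (x : Fin m → ZMod 2) : #(supportEquiv m x) = hammingNorm x :=
  rfl

lemma supportEquiv_zero : supportEquiv m 0 = ∅ := by
  ext i
  simp [mem_supportEquiv]

lemma card_symmDiff_supportEquiv (x y : Fin m → ZMod 2) :
    #(supportEquiv m x ∆ supportEquiv m y) = hammingDist x y := by
  have hne (a b : ZMod 2) : (a ≠ 0 ∧ ¬ b ≠ 0 ∨ b ≠ 0 ∧ ¬ a ≠ 0) ↔ a ≠ b := by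
    revert a b; decide
  rw [hammingDist]
  congr 1
  ext i
  rw [Finset.mem_symmDiff, mem_supportEquiv, mem_supportEquiv, hne, mem_filter_univ]

lemma supportEquiv_mem_supportFamily {x : Fin m → ZMod 2} :
    supportEquiv m x ∈ supportFamily C ↔ x ∈ C := by
  simp [supportFamily]

lemma exists_mem_supportFamily {p : Finset (Fin m) → Prop} :
    (∃ S ∈ supportFamily C, p S) ↔ ∃ x ∈ C, p (supportEquiv m x) := by
  simp only [(supportEquiv m).surjective.exists, supportEquiv_mem_supportFamily]

lemma ncard_sep_supportEquiv (p : Finset (Fin m) → Prop) [DecidablePred p] :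
    {x ∈ C | p (supportEquiv m x)}.ncard = #{S ∈ supportFamily C | p S} := by
  rw [← Set.ncard_image_of_injective _ (supportEquiv m).injective, ← Set.ncard_coe_finset]
  congr 1
  ext S
  obtain ⟨x, rfl⟩ := (supportEquiv m).surjective S
  simp [supportEquiv_mem_supportFamily]

lemma distToFamily_supportFamily (x : Fin m → ZMod 2) :
    distToFamily (supportFamily C) (supportEquiv m x) = distToCode C x := by
  simp only [distToFamily, distToCode, exists_mem_supportFamily, card_symmDiff_supportEquiv]

lemma card_wordsAtDist_supportFamily (x : Fin m → ZMod 2) (k : ℕ) :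
    #(wordsAtDist (supportFamily C) (supportEquiv m x) k) =
      {c ∈ C | hammingDist x c = k}.ncard := by
  simp only [wordsAtDist, ← ncard_sep_supportEquiv, card_symmDiff_supportEquiv]

lemma IsCompletelyRegular.isRegularFamily (hreg : IsCompletelyRegular C) :
    IsRegularFamily (supportFamily C) := by
  intro G G' hdist k
  obtain ⟨x, rfl⟩ := (supportEquiv m).surjective G
  obtain ⟨y, rfl⟩ := (supportEquiv m).surjective G'
  rw [distToFamily_supportFamily, distToFamily_supportFamily] at hdist
  rw [card_wordsAtDist_supportFamily, card_wordsAtDist_supportFamily, hreg x y hdist k]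

lemma IsMinDist.isSeparatedFamily {δ : ℕ} (hd : IsMinDist C δ) :
    IsSeparatedFamily (supportFamily C) δ := by
  intro S hS T hT hne
  obtain ⟨x, rfl⟩ := (supportEquiv m).surjective S
  obtain ⟨y, rfl⟩ := (supportEquiv m).surjective T
  rw [card_symmDiff_supportEquiv]
  exact hd.1 x (supportEquiv_mem_supportFamily.1 hS) y (supportEquiv_mem_supportFamily.1 hT)
    fun hxy => hne (congrArg _ hxy)

lemma IsMinDist.exists_card_symmDiff_eq {δ : ℕ} (hd : IsMinDist C δ) :
    ∃ S ∈ supportFamily C, ∃ T ∈ supportFamily C, #(S ∆ T) = δ := by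
  obtain ⟨x, hx, y, hy, -, hxy⟩ := hd.2
  exact ⟨_, supportEquiv_mem_supportFamily.2 hx, _, supportEquiv_mem_supportFamily.2 hy,
    (card_symmDiff_supportEquiv x y).trans hxy⟩

lemma ncard_hammingNorm_eq (C : Set (Fin m → ZMod 2)) (k : ℕ) :
    {β ∈ C | hammingNorm β = k}.ncard = #((supportFamily C) # k) :=
  ncard_sep_supportEquiv fun S => #S = k

lemma ncard_hammingNorm_eq_and_ne_zero (C : Set (Fin m → ZMod 2)) (k : ℕ) (T : Finset (Fin m)) :
    {β ∈ C | hammingNorm β = k ∧ ∀ i ∈ T, β i ≠ 0}.ncard =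
      blockDegree ((supportFamily C) # k) T := by
  rw [blockDegree, Finset.slice, filter_filter, ← ncard_sep_supportEquiv]
  simp only [card_supportEquiv, Finset.subset_iff, mem_supportEquiv]

end Supports

/-- In a binary completely regular code of length 15 with minimum distance 5
containing `0`, the weight-5 codewords form a 2-(15,5,4) design; in particular
there are 42 codewords of weight 5. -/
theorem stmt_15 (C : Set (Fin 15 → ZMod 2)) (h0 : (0 : Fin 15 → ZMod 2) ∈ C)
    (hreg : IsCompletelyRegular C) (hd : IsMinDist C 5) :
    (∀ T : Finset (Fin 15), T.card = 2 →
      {β ∈ C | hammingNorm β = 5 ∧ ∀ i ∈ T, β i ≠ 0}.ncard = 4) ∧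
    {β ∈ C | hammingNorm β = 5}.ncard = 42 := by
  have hempty : ∅ ∈ supportFamily C := by
    rwa [← supportEquiv_zero, supportEquiv_mem_supportFamily]
  have hregular := hreg.isRegularFamily
  have hdesign : IsDesign ((supportFamily C).slice 5) 2 4 :=
    hregular.isDesign_slice_five hd.isSeparatedFamily hempty (Fintype.card_fin 15)
      (hregular.slice_nonempty hempty hd.exists_card_symmDiff_eq)
  refine ⟨fun T hT => (ncard_hammingNorm_eq_and_ne_zero C 5 T).trans (hdesign T hT), ?_⟩
  have hcard : 105 * 4 = ((supportFamily C).slice 5).card * 10 :=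
    hdesign.card_mul_choose Finset.sized_slice
  rw [ncard_hammingNorm_eq]
  omega
end

section
/- Let C be a binary code of length m with minimum distance δ ≥ 1, set t = ⌊δ/2⌋, fix a t-element subset T of the m coordinates, and let S be the set of codewords of weight δ whose support contains T. Then: (i) for any two distinct codewords α, β ∈ S, supp(α) ∩ supp(β) = T; and (ii) (δ − t)·|S| ≤ m − t, so |S| ≤ (m − t)/(δ − t). -/
open Set

/-!
Two binary words satisfy `wt α + wt β = d(α, β) + 2 |supp α ∩ supp β|`, so words of small weight
that are far apart have supports with a small intersection. When all the supports contain `T`, this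
forces any two of them to meet in `T` alone: they form a sunflower with kernel `T`. The petals
`supp α \ T` are then disjoint sets of size `δ - t` inside the complement of `T`, which has `m - t`
points.
-/

open scoped Finset

section Sunflower

variable {κ ι : Type*} [DecidableEq ι] {f : κ → Finset ι} {T : Finset ι}

/-- The family `f a`, `a ∈ s`, is a sunflower (or `Δ`-system) with kernel `T`: any two of its
members with distinct indices meet exactly in `T`. The kernel need not lie in `f a` if `s = {a}`. -/
def IsSunflower (s : Set κ) (f : κ → Finset ι) (T : Finset ι) : Prop :=
  s.Pairwise fun a b ↦ f a ∩ f b = T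

lemma IsSunflower.pairwiseDisjoint_sdiff {s : Set κ} (h : IsSunflower s f T) :
    s.PairwiseDisjoint fun a ↦ f a \ T := by
  intro a ha b hb hab
  rw [Function.onFun, Finset.disjoint_left]
  intro i hia hib
  rw [Finset.mem_sdiff] at hia hib
  exact hia.2 (h ha hb hab ▸ Finset.mem_inter.2 ⟨hia.1, hib.1⟩)

lemma IsSunflower.card_mul_le_card_sdiff {s : Finset κ} {U : Finset ι} {k : ℕ}
    (h : IsSunflower (s : Set κ) f T) (hU : ∀ a ∈ s, f a ⊆ U) (hk : ∀ a ∈ s, k ≤ #(f a \ T)) :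
    #s * k ≤ #(U \ T) :=
  calc
    #s * k ≤ ∑ a ∈ s, #(f a \ T) := Finset.card_nsmul_le_sum _ _ _ hk
    _ = #(s.biUnion fun a ↦ f a \ T) := (Finset.card_biUnion h.pairwiseDisjoint_sdiff).symm
    _ ≤ #(U \ T) := Finset.card_le_card <|
      Finset.biUnion_subset.2 fun a ha ↦ Finset.sdiff_subset_sdiff (hU a ha) subset_rfl

end Sunflower

section HammingSupport

variable {ι : Type*} [Fintype ι] {β : ι → Type*} [∀ i, DecidableEq (β i)] [∀ i, Zero (β i)]

/-- The support of a word as a `Finset`, so that its cardinality is the Hamming weight. -/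
def hammingSupport (x : ∀ i, β i) : Finset ι := {i | x i ≠ 0}

lemma mem_hammingSupport {x : ∀ i, β i} {i : ι} : i ∈ hammingSupport x ↔ x i ≠ 0 :=
  Finset.mem_filter_univ i

lemma card_hammingSupport (x : ∀ i, β i) : #(hammingSupport x) = hammingNorm x := rfl

lemma coe_hammingSupport (x : ∀ i, β i) : (hammingSupport x : Set ι) = {i | x i ≠ 0} :=
  Finset.coe_filter_univ _

variable [DecidableEq ι] {x y : ∀ i, β i} {T : Finset ι}

lemma hammingDist_add_two_mul_card_inter_hammingSupport
    (hxy : ∀ i, x i ≠ 0 → y i ≠ 0 → x i = y i) :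
    hammingDist x y + 2 * #(hammingSupport x ∩ hammingSupport y) =
      hammingNorm x + hammingNorm y := by
  have coordinatewise (i : ι) :
      (if x i ≠ y i then 1 else 0) + 2 * (if x i ≠ 0 ∧ y i ≠ 0 then 1 else 0) =
        (if x i ≠ 0 then 1 else 0) + (if y i ≠ 0 then 1 else 0) := by
    grind
  simp only [hammingDist, hammingNorm, hammingSupport, ← Finset.filter_and, Finset.card_filter,
    Finset.mul_sum, ← Finset.sum_add_distrib, coordinatewise]

lemma hammingSupport_inter_hammingSupport_eq (hxy : ∀ i, x i ≠ 0 → y i ≠ 0 → x i = y i)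
    (hTx : T ⊆ hammingSupport x) (hTy : T ⊆ hammingSupport y)
    (hdist : hammingNorm x + hammingNorm y < hammingDist x y + 2 * (#T + 1)) :
    hammingSupport x ∩ hammingSupport y = T := by
  have hcard := hammingDist_add_two_mul_card_inter_hammingSupport hxy
  exact (Finset.eq_of_subset_of_card_le (Finset.subset_inter hTx hTy) (by lia)).symm

end HammingSupport

section ConstantWeight

variable {ι : Type*} [Fintype ι] {S : Set (ι → ZMod 2)} {d w : ℕ} {T : Finset ι}

lemma isSunflower_hammingSupport [DecidableEq ι] (hd : S.Pairwise fun α β ↦ d ≤ hammingDist α β)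
    (hw : ∀ α ∈ S, hammingNorm α ≤ w) (hT : ∀ α ∈ S, T ⊆ hammingSupport α)
    (hwd : 2 * w ≤ d + 2 * #T + 1) : IsSunflower S hammingSupport T := by
  intro α hα β hβ hαβ
  have eq_of_ne_zero : ∀ a b : ZMod 2, a ≠ 0 → b ≠ 0 → a = b := by decide
  have hdist := hd hα hβ hαβ
  have hwα := hw α hα
  have hwβ := hw β hβ
  exact hammingSupport_inter_hammingSupport_eq (fun i ↦ eq_of_ne_zero (α i) (β i))
    (hT α hα) (hT β hβ) (by lia)

theorem stmt_16_general (hd : S.Pairwise fun α β ↦ d ≤ hammingDist α β)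
    (hw : ∀ α ∈ S, hammingNorm α = w) (hT : ∀ α ∈ S, ∀ i ∈ T, α i ≠ 0)
    (hwd : 2 * w ≤ d + 2 * #T + 1) (hTw : #T < w) :
    (∀ α ∈ S, ∀ β ∈ S, α ≠ β → {i | α i ≠ 0} ∩ {i | β i ≠ 0} = (T : Set ι)) ∧
    (w - #T) * S.ncard ≤ Fintype.card ι - #T ∧
    S.ncard ≤ (Fintype.card ι - #T) / (w - #T) := by
  classical
  have hTsupp : ∀ α ∈ S, T ⊆ hammingSupport α := fun α hα i hi ↦
    mem_hammingSupport.2 (hT α hα i hi)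
  have sunflower : IsSunflower S hammingSupport T :=
    isSunflower_hammingSupport hd (fun α hα ↦ (hw α hα).le) hTsupp hwd
  have card_petal : ∀ α ∈ S, #(hammingSupport α \ T) = w - #T := fun α hα ↦ by
    rw [Finset.card_sdiff_of_subset (hTsupp α hα), card_hammingSupport, hw α hα]
  have hcount : S.ncard * (w - #T) ≤ Fintype.card ι - #T := by
    rw [Set.ncard_eq_toFinset_card', ← Finset.card_univ,
      ← Finset.card_sdiff_of_subset T.subset_univ]
    exact IsSunflower.card_mul_le_card_sdiff (by rwa [Set.coe_toFinset])
      (fun α _ ↦ Finset.subset_univ _) fun α hα ↦ (card_petal α (Set.mem_toFinset.1 hα)).ge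
  refine ⟨fun α hα β hβ hαβ ↦ ?_, mul_comm S.ncard _ ▸ hcount,
    (Nat.le_div_iff_mul_le (Nat.sub_pos_of_lt hTw)).2 hcount⟩
  rw [← coe_hammingSupport, ← coe_hammingSupport, ← Finset.coe_inter, sunflower hα hβ hαβ]

end ConstantWeight

/-- For a binary code of minimum distance `δ ≥ 1` and a `⌊δ/2⌋`-subset `T` of the
coordinates, the weight-`δ` codewords whose support contains `T` pairwise intersect
exactly in `T`, and there are at most `(m - t)/(δ - t)` of them, `t = ⌊δ/2⌋`. -/
theorem stmt_16 {m δ : ℕ} (C : Set (Fin m → ZMod 2)) (hd : IsMinDist C δ)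
    (hδ : 1 ≤ δ) (T : Finset (Fin m)) (hT : T.card = δ / 2) :
    (∀ α ∈ {α ∈ C | hammingNorm α = δ ∧ ∀ i ∈ T, α i ≠ 0},
      ∀ β ∈ {α ∈ C | hammingNorm α = δ ∧ ∀ i ∈ T, α i ≠ 0}, α ≠ β →
        {i : Fin m | α i ≠ 0} ∩ {i : Fin m | β i ≠ 0} = (T : Set (Fin m))) ∧
    (δ - δ / 2) * {α ∈ C | hammingNorm α = δ ∧ ∀ i ∈ T, α i ≠ 0}.ncard ≤ m - δ / 2 ∧
    {α ∈ C | hammingNorm α = δ ∧ ∀ i ∈ T, α i ≠ 0}.ncard ≤ (m - δ / 2) / (δ - δ / 2) := by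
  simpa only [Fintype.card_fin, hT] using
    stmt_16_general (S := {α ∈ C | hammingNorm α = δ ∧ ∀ i ∈ T, α i ≠ 0}) (d := δ) (w := δ) (T := T)
      (fun α hα β hβ ↦ hd.1 α hα.1 β hβ.1) (fun α hα ↦ hα.2.1) (fun α hα ↦ hα.2.2) (by lia) (by lia)
end

section
/- Let C be a binary completely regular code of length 16 with minimum distance 6. Then the number of ordered pairs (α,β) ∈ C × C with d(α,β) = i equals 256 for i = 0, 112·256 for i = 6, 30·256 for i = 8, 112·256 for i = 10, 256 for i = 16, and is 0 for all other values of i; that is, C has distance distribution a(C) = (1,0,0,0,0,0,112,0,30,0,112,0,0,0,0,0,1). In particular the Hamming distance between any two codewords of C lies in {0, 6, 8, 10, 16}. -/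
open Set

/-!
For a completely regular code the number `B i k` of codewords at distance `k` from a point at
distance `i` from the code is well defined. Counting, for a point `x`, the pairs of a neighbour of
`x` and a codeword at distance `k + 1` from it gives a three-term recurrence in `k` for the columns
of `B`, with coefficients the numbers `c`, `a`, `b` of neighbours of `x` one step closer to,
equally far from, and one step further from the code. Minimum distance `6` makes the codeword
nearest to a point unique up to distance `2`, which fixes these numbers there. In length `16`,
integrality in the recurrence leaves `B 3 3 ∈ {3, 5}`; since `c` is strictly increasing, looking one
distance further rules out `3` and forces `c = 16` at distance `4`, so that no point is further
away. All coefficients are now known, and the recurrence determines `B`.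
-/

section HammingSpace

variable {m : ℕ} {x c : Fin m → ZMod 2} {j : Fin m}

/-- The neighbour of `x` in the Hamming graph that differs from `x` in coordinate `j`. -/
def flipAt (x : Fin m → ZMod 2) (j : Fin m) : Fin m → ZMod 2 :=
  x + Pi.single j 1

lemma flipAt_flipAt (x : Fin m → ZMod 2) (j : Fin m) : flipAt (flipAt x j) j = x := by
  simp only [flipAt, add_assoc, ← Pi.single_add, CharTwo.add_self_eq_zero, Pi.single_zero,
    add_zero]

lemma flipAt_apply_self (x : Fin m → ZMod 2) (j : Fin m) : flipAt x j j = x j + 1 := by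
  simp [flipAt]

lemma flipAt_apply_of_ne {i : Fin m} (h : i ≠ j) : flipAt x j i = x i := by
  simp [flipAt, h]

lemma flipAt_comm (x : Fin m → ZMod 2) (j l : Fin m) :
    flipAt (flipAt x j) l = flipAt (flipAt x l) j :=
  add_right_comm _ _ _

lemma hammingDist_flipAt_of_ne (h : x j ≠ c j) :
    hammingDist (flipAt x j) c + 1 = hammingDist x c := by
  have flip_eq : ∀ a b : ZMod 2, a ≠ b → a + 1 = b := by decide
  have support_eq : ({i | x i ≠ c i} : Finset (Fin m)) =
      insert j ({i | flipAt x j i ≠ c i} : Finset (Fin m)) := by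
    ext i
    obtain rfl | hij := eq_or_ne i j
    · simp [h]
    · simp [hij, flipAt_apply_of_ne hij]
  rw [hammingDist, hammingDist, support_eq, Finset.card_insert_of_notMem]
  simp [flipAt_apply_self, flip_eq _ _ h]

lemma hammingDist_flipAt_of_eq (h : x j = c j) :
    hammingDist (flipAt x j) c = hammingDist x c + 1 := by
  have hne : flipAt x j j ≠ c j := by simp [flipAt_apply_self, h]
  simpa only [flipAt_flipAt] using (hammingDist_flipAt_of_ne hne).symm

lemma sum_hammingDist_flipAt (x c : Fin m → ZMod 2) (g : ℕ → ℕ) :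
    ∑ j, g (hammingDist (flipAt x j) c) =
      hammingDist x c * g (hammingDist x c - 1) +
        (m - hammingDist x c) * g (hammingDist x c + 1) := by
  have card_agree : ({j | ¬ x j ≠ c j} : Finset (Fin m)).card = m - hammingDist x c := by
    rw [← Finset.compl_filter, Finset.card_compl, Fintype.card_fin, hammingDist]
  rw [← Finset.sum_filter_add_sum_filter_not _ (fun j => x j ≠ c j)]
  congr 1
  · rw [Finset.sum_congr rfl (g := fun _ => g (hammingDist x c - 1)), Finset.sum_const,
      smul_eq_mul, hammingDist]
    intro j hj
    rw [← hammingDist_flipAt_of_ne (Finset.mem_filter.1 hj).2, Nat.add_sub_cancel]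
  · rw [Finset.sum_congr rfl (g := fun _ => g (hammingDist x c + 1)), Finset.sum_const,
      smul_eq_mul, card_agree]
    intro j hj
    rw [hammingDist_flipAt_of_eq (not_not.1 (Finset.mem_filter.1 hj).2)]

lemma hammingDist_flipAt_le (x c : Fin m → ZMod 2) (j : Fin m) :
    hammingDist (flipAt x j) c ≤ hammingDist x c + 1 := by
  by_cases h : x j = c j
  · exact (hammingDist_flipAt_of_eq h).le
  · have := hammingDist_flipAt_of_ne h
    lia

lemma hammingDist_le_length (x c : Fin m → ZMod 2) : hammingDist x c ≤ m := by
  simpa using hammingDist_le_card_fintype (x := x) (y := c)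

lemma exists_hammingDist_eq (c : Fin m → ZMod 2) {i : ℕ} (hi : i ≤ m) :
    ∃ x, hammingDist x c = i := by
  obtain ⟨s, -, rfl⟩ := Finset.exists_subset_card_eq (s := (Finset.univ : Finset (Fin m)))
    (n := i) (by simpa using hi)
  refine ⟨fun j => if j ∈ s then c j + 1 else c j, ?_⟩
  simp [hammingDist]

end HammingSpace

section DistanceToCode

variable {m : ℕ} {C : Set (Fin m → ZMod 2)} {x : Fin m → ZMod 2} {i δ : ℕ}

lemma exists_hammingDist_eq_distToCode (hC : C.Nonempty) (x : Fin m → ZMod 2) :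
    ∃ c ∈ C, hammingDist x c = distToCode C x := by
  obtain ⟨c, hc⟩ := hC
  have : {d | ∃ c ∈ C, hammingDist x c = d}.Nonempty := ⟨_, c, hc, rfl⟩
  exact Nat.sInf_mem this

lemma distToCode_le {c : Fin m → ZMod 2} (hc : c ∈ C) : distToCode C x ≤ hammingDist x c :=
  Nat.sInf_le ⟨c, hc, rfl⟩

lemma distToCode_eq_zero (hx : x ∈ C) : distToCode C x = 0 := by
  simpa using distToCode_le (x := x) hx

lemma distToCode_flipAt_le (hC : C.Nonempty) (x : Fin m → ZMod 2) (j : Fin m) :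
    distToCode C (flipAt x j) ≤ distToCode C x + 1 := by
  obtain ⟨c, hc, hxc⟩ := exists_hammingDist_eq_distToCode hC x
  exact hxc ▸ (distToCode_le hc).trans (hammingDist_flipAt_le x c j)

lemma distToCode_le_flipAt (hC : C.Nonempty) (x : Fin m → ZMod 2) (j : Fin m) :
    distToCode C x ≤ distToCode C (flipAt x j) + 1 := by
  simpa only [flipAt_flipAt] using distToCode_flipAt_le hC (flipAt x j) j

lemma exists_distToCode_flipAt_eq (hC : C.Nonempty) (hx : distToCode C x = i + 1) :
    ∃ j, distToCode C (flipAt x j) = i := by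
  obtain ⟨c, hc, hxc⟩ := exists_hammingDist_eq_distToCode hC x
  have hne : x ≠ c := hammingDist_ne_zero.1 (by lia)
  obtain ⟨j, hj⟩ := Function.ne_iff.1 hne
  have closer := hammingDist_flipAt_of_ne hj
  have upper := distToCode_le (x := flipAt x j) hc
  have lower := distToCode_le_flipAt hC x j
  exact ⟨j, by lia⟩

lemma IsMinDist.nonempty (hd : IsMinDist C δ) : C.Nonempty :=
  let ⟨x, hx, _⟩ := hd.2
  ⟨x, hx⟩

lemma IsMinDist.eq_of_hammingDist_add_lt (hd : IsMinDist C δ) {c c' : Fin m → ZMod 2}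
    (hc : c ∈ C) (hc' : c' ∈ C) (h : hammingDist x c + hammingDist x c' < δ) : c = c' := by
  by_contra hne
  have := hd.1 c hc c' hc' hne
  have := hammingDist_triangle_left c c' x
  lia

lemma IsMinDist.distToCode_eq (hd : IsMinDist C δ) {c : Fin m → ZMod 2} (hc : c ∈ C)
    (h : 2 * hammingDist x c ≤ δ) : distToCode C x = hammingDist x c := by
  refine (distToCode_le hc).antisymm ?_
  by_contra! hlt
  obtain ⟨c', hc', hxc'⟩ := exists_hammingDist_eq_distToCode hd.nonempty x
  obtain rfl := hd.eq_of_hammingDist_add_lt hc hc' (x := x) (by lia)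
  exact hlt.ne' hxc'

lemma IsMinDist.exists_distToCode_eq (hd : IsMinDist C δ) (hi : 2 * i ≤ δ) :
    ∃ x, distToCode C x = i := by
  obtain ⟨c, hc, c', -, -, rfl⟩ := hd.2
  have := hammingDist_le_length c c'
  obtain ⟨x, rfl⟩ := exists_hammingDist_eq c (i := i) (by lia)
  exact ⟨x, hd.distToCode_eq hc hi⟩

lemma IsMinDist.sum_distToCode_flipAt (hd : IsMinDist C δ) (hx : 2 * distToCode C x + 2 ≤ δ)
    (g : ℕ → ℕ) :
    ∑ j, g (distToCode C (flipAt x j)) =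
      distToCode C x * g (distToCode C x - 1) +
        (m - distToCode C x) * g (distToCode C x + 1) := by
  obtain ⟨c, hc, hxc⟩ := exists_hammingDist_eq_distToCode hd.nonempty x
  rw [← hxc, ← sum_hammingDist_flipAt x c g]
  refine Finset.sum_congr rfl fun j _ => ?_
  have := hammingDist_flipAt_le x c j
  rw [hd.distToCode_eq hc (by lia)]

/-- The number of neighbours of `x` at distance `i` from `C`. For `i` one less than, equal to, or
one more than the distance of `x` itself, these are the intersection numbers `c`, `a`, `b`. -/
noncomputable def neighborCount (C : Set (Fin m → ZMod 2)) (x : Fin m → ZMod 2) (i : ℕ) : ℕ :=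
  ({j | distToCode C (flipAt x j) = i} : Finset (Fin m)).card

lemma exists_distToCode_eq_of_neighborCount_ne_zero (h : neighborCount C x i ≠ 0) :
    ∃ y, distToCode C y = i := by
  obtain ⟨j, hj⟩ := Finset.card_ne_zero.1 h
  exact ⟨flipAt x j, (Finset.mem_filter.1 hj).2⟩

lemma sum_distToCode_flipAt (hC : C.Nonempty) (hx : distToCode C x = i + 1) (g : ℕ → ℕ) :
    ∑ j, g (distToCode C (flipAt x j)) =
      neighborCount C x i * g i + neighborCount C x (i + 1) * g (i + 1) +
        neighborCount C x (i + 2) * g (i + 2) := by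
  simp only [neighborCount, Finset.card_filter, Finset.sum_mul, ← Finset.sum_add_distrib]
  refine Finset.sum_congr rfl fun j _ => ?_
  have := distToCode_flipAt_le hC x j
  have := distToCode_le_flipAt hC x j
  have : distToCode C (flipAt x j) = i ∨ distToCode C (flipAt x j) = i + 1 ∨
    distToCode C (flipAt x j) = i + 2 := by lia
  rcases this with h | h | h <;> simp [h]

lemma neighborCount_add_add (hC : C.Nonempty) (hx : distToCode C x = i + 1) :
    neighborCount C x i + neighborCount C x (i + 1) + neighborCount C x (i + 2) = m := by
  simpa using (sum_distToCode_flipAt hC hx fun _ => 1).symm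

-- If `flipAt z p` is a step towards `C`, each further step from it towards `C` commutes with
-- flipping `p`, so it is also a step towards `C` from `z`; flipping `p` itself is one more.
lemma exists_neighborCount_lt (hC : C.Nonempty) {z : Fin m → ZMod 2}
    (hz : distToCode C z = i + 2) :
    ∃ y, distToCode C y = i + 1 ∧ neighborCount C y i < neighborCount C z (i + 1) := by
  obtain ⟨p, hp⟩ := exists_distToCode_flipAt_eq hC hz
  refine ⟨flipAt z p, hp, Finset.card_lt_card ?_⟩
  refine Finset.ssubset_iff_of_subset (fun q hq => ?_) |>.2 ⟨p, ?_, ?_⟩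
  · rw [Finset.mem_filter_univ, flipAt_comm] at hq
    have := distToCode_le_flipAt hC z q
    have := distToCode_le_flipAt hC (flipAt z q) p
    rw [Finset.mem_filter_univ]
    lia
  · simpa using hp
  · simp [flipAt_flipAt, hz]

end DistanceToCode

section OuterDistribution

variable {m : ℕ} {C : Set (Fin m → ZMod 2)} {x : Fin m → ZMod 2} {i k δ : ℕ}

/-- The number of codewords of `C` at distance `k` from `x`. -/
noncomputable def codewordCount (C : Set (Fin m → ZMod 2)) (x : Fin m → ZMod 2) (k : ℕ) : ℕ :=
  {c ∈ C | hammingDist x c = k}.ncard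

open Classical in
lemma codewordCount_eq_card (C : Set (Fin m → ZMod 2)) (x : Fin m → ZMod 2) (k : ℕ) :
    codewordCount C x k = ({c ∈ C.toFinset | hammingDist x c = k} : Finset _).card := by
  rw [codewordCount, Set.ncard_eq_toFinset_card']
  congr 1
  ext c
  simp

lemma codewordCount_ne_zero_iff :
    codewordCount C x k ≠ 0 ↔ ∃ c ∈ C, hammingDist x c = k := by
  rw [codewordCount, Ne, Set.ncard_eq_zero, ← Ne, ← Set.nonempty_iff_ne_empty]
  rfl

-- Both sides count the pairs of a neighbour of `x` and a codeword at distance `k + 1` from it.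
lemma sum_codewordCount_flipAt (C : Set (Fin m → ZMod 2)) (x : Fin m → ZMod 2) (k : ℕ) :
    ∑ j, codewordCount C (flipAt x j) (k + 1) =
      (k + 2) * codewordCount C x (k + 2) + (m - k) * codewordCount C x k := by
  classical
  simp only [codewordCount_eq_card, Finset.card_filter, Finset.mul_sum]
  rw [Finset.sum_comm, ← Finset.sum_add_distrib]
  refine Finset.sum_congr rfl fun c _ => ?_
  rw [sum_hammingDist_flipAt x c fun d => if d = k + 1 then 1 else 0]
  grind

lemma sum_codewordCount (C : Set (Fin m → ZMod 2)) (x : Fin m → ZMod 2) :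
    ∑ k ∈ Finset.range (m + 1), codewordCount C x k = C.ncard := by
  classical
  simp only [codewordCount_eq_card]
  rw [Set.ncard_eq_toFinset_card', ← Finset.card_eq_sum_card_fiberwise]
  exact fun c _ => Finset.mem_coe.2 (Finset.mem_range_succ_iff.2 (hammingDist_le_length x c))

open Classical in
lemma ncard_pairs_eq_sum_codewordCount (C : Set (Fin m → ZMod 2)) (k : ℕ) :
    {p : (Fin m → ZMod 2) × (Fin m → ZMod 2) |
      p.1 ∈ C ∧ p.2 ∈ C ∧ hammingDist p.1 p.2 = k}.ncard =
      ∑ x ∈ C.toFinset, codewordCount C x k := by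
  rw [Set.ncard_eq_toFinset_card', Finset.card_eq_sum_card_fiberwise (f := Prod.fst)
    (t := C.toFinset) fun p hp => by simp_all]
  refine Finset.sum_congr rfl fun x hx => ?_
  rw [codewordCount_eq_card]
  refine Finset.card_nbij' Prod.snd (Prod.mk x) ?_ ?_ ?_ ?_ <;> intro p hp <;> aesop

/-- The number `B i k` of codewords of `C` at distance `k` from a point at distance `i` from `C`,
an entry of the outer distribution matrix. It is meaningful only for completely regular codes; the
infimum is a way to pick the common value, with `B i k = 0` if no point is at distance `i`. -/
noncomputable def outerNumber (C : Set (Fin m → ZMod 2)) (i k : ℕ) : ℕ :=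
  sInf {n | ∃ x, distToCode C x = i ∧ codewordCount C x k = n}

lemma exists_hammingDist_eq_of_outerNumber_ne_zero (h : outerNumber C i k ≠ 0) :
    ∃ x, distToCode C x = i ∧ ∃ c ∈ C, hammingDist x c = k := by
  have attained := Nat.sInf_mem (Nat.nonempty_of_sInf_eq_succ (Nat.succ_pred_eq_of_ne_zero h).symm)
  obtain ⟨x, hx, hcount⟩ := attained
  refine ⟨x, hx, codewordCount_ne_zero_iff.1 ?_⟩
  rwa [hcount]

lemma outerNumber_eq_zero_of_lt (h : k < i) : outerNumber C i k = 0 := by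
  by_contra hne
  obtain ⟨x, rfl, c, hc, rfl⟩ := exists_hammingDist_eq_of_outerNumber_ne_zero hne
  exact h.not_ge (distToCode_le hc)

lemma IsMinDist.outerNumber_eq_zero (hd : IsMinDist C δ) (h : i + k < δ) (hne : i ≠ k) :
    outerNumber C i k = 0 := by
  by_contra h0
  obtain ⟨x, rfl, c, hc, rfl⟩ := exists_hammingDist_eq_of_outerNumber_ne_zero h0
  obtain ⟨c', hc', hxc'⟩ := exists_hammingDist_eq_distToCode hd.nonempty x
  obtain rfl := hd.eq_of_hammingDist_add_lt hc' hc (x := x) (by lia)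
  exact hne hxc'.symm

namespace IsCompletelyRegular

lemma codewordCount_eq (hreg : IsCompletelyRegular C) (x : Fin m → ZMod 2) (k : ℕ) :
    codewordCount C x k = outerNumber C (distToCode C x) k := by
  have : {n | ∃ y, distToCode C y = distToCode C x ∧ codewordCount C y k = n} =
      {codewordCount C x k} := by
    ext n
    constructor
    · rintro ⟨y, hy, rfl⟩
      exact hreg y x hy k
    · rintro rfl
      exact ⟨x, rfl, rfl⟩
  rw [outerNumber, this, csInf_singleton]

lemma codewordCount_eq_of_mem (hreg : IsCompletelyRegular C) (hx : x ∈ C) (k : ℕ) :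
    codewordCount C x k = outerNumber C 0 k := by
  rw [hreg.codewordCount_eq, distToCode_eq_zero hx]

lemma outerNumber_zero_ne_zero (hreg : IsCompletelyRegular C) {y : Fin m → ZMod 2} (hx : x ∈ C)
    (hy : y ∈ C) : outerNumber C 0 (hammingDist x y) ≠ 0 := by
  rw [← hreg.codewordCount_eq_of_mem hx]
  exact codewordCount_ne_zero_iff.2 ⟨y, hy, rfl⟩

lemma outerNumber_self (hreg : IsCompletelyRegular C) (hd : IsMinDist C δ) (hi : 2 * i < δ) :
    outerNumber C i i = 1 := by
  obtain ⟨x, rfl⟩ := hd.exists_distToCode_eq hi.le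
  obtain ⟨c, hc, hxc⟩ := exists_hammingDist_eq_distToCode hd.nonempty x
  rw [← hreg.codewordCount_eq, codewordCount, Set.ncard_eq_one]
  refine ⟨c, Set.eq_singleton_iff_unique_mem.2 ⟨⟨hc, hxc⟩, ?_⟩⟩
  rintro c' ⟨hc', hxc'⟩
  exact hd.eq_of_hammingDist_add_lt hc' hc (x := x) (by lia)

lemma ncard_eq_sum_outerNumber (hreg : IsCompletelyRegular C) (hC : C.Nonempty) :
    C.ncard = ∑ k ∈ Finset.range (m + 1), outerNumber C 0 k := by
  obtain ⟨x, hx⟩ := hC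
  simp only [← hreg.codewordCount_eq_of_mem hx, sum_codewordCount]

lemma ncard_pairs_hammingDist_eq (hreg : IsCompletelyRegular C) (k : ℕ) :
    {p : (Fin m → ZMod 2) × (Fin m → ZMod 2) |
      p.1 ∈ C ∧ p.2 ∈ C ∧ hammingDist p.1 p.2 = k}.ncard = C.ncard * outerNumber C 0 k := by
  classical
  rw [ncard_pairs_eq_sum_codewordCount, Set.ncard_eq_toFinset_card']
  exact Finset.sum_const_nat fun x hx => hreg.codewordCount_eq_of_mem (Set.mem_toFinset.1 hx) k

lemma sum_outerNumber_flipAt (hreg : IsCompletelyRegular C) (x : Fin m → ZMod 2) (k : ℕ) :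
    ∑ j, outerNumber C (distToCode C (flipAt x j)) (k + 1) =
      (k + 2) * outerNumber C (distToCode C x) (k + 2) +
        (m - k) * outerNumber C (distToCode C x) k := by
  simp only [← hreg.codewordCount_eq, sum_codewordCount_flipAt]

lemma outerNumber_recurrence (hreg : IsCompletelyRegular C) (hd : IsMinDist C δ)
    (hi : 2 * i + 2 ≤ δ) (k : ℕ) :
    i * outerNumber C (i - 1) (k + 1) + (m - i) * outerNumber C (i + 1) (k + 1) =
      (k + 2) * outerNumber C i (k + 2) + (m - k) * outerNumber C i k := by
  obtain ⟨x, rfl⟩ := hd.exists_distToCode_eq (i := i) (by lia)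
  rw [← hreg.sum_outerNumber_flipAt, hd.sum_distToCode_flipAt hi fun l => outerNumber C l (k + 1)]

lemma neighborCount_recurrence (hreg : IsCompletelyRegular C) (hC : C.Nonempty)
    (hx : distToCode C x = i + 1) (k : ℕ) :
    neighborCount C x i * outerNumber C i (k + 1) +
        neighborCount C x (i + 1) * outerNumber C (i + 1) (k + 1) +
        neighborCount C x (i + 2) * outerNumber C (i + 2) (k + 1) =
      (k + 2) * outerNumber C (i + 1) (k + 2) + (m - k) * outerNumber C (i + 1) k := by
  rw [← sum_distToCode_flipAt hC hx fun l => outerNumber C l (k + 1),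
    hreg.sum_outerNumber_flipAt, hx]

lemma neighborCount_mul_outerNumber_self (hreg : IsCompletelyRegular C) (hC : C.Nonempty)
    (hx : distToCode C x = i + 2) :
    neighborCount C x (i + 1) * outerNumber C (i + 1) (i + 1) =
      (i + 2) * outerNumber C (i + 2) (i + 2) := by
  simpa [outerNumber_eq_zero_of_lt] using hreg.neighborCount_recurrence hC hx i

end IsCompletelyRegular

end OuterDistribution

open Matrix

section Recurrence

variable {n : Type*} [Fintype n] {M : Matrix n n ℕ} {a b : ℕ → ℕ} {f g : ℕ → n → ℕ}

lemma eq_of_mulVec_recurrence (ha : ∀ k, a k ≠ 0)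
    (hf : ∀ k, M *ᵥ f (k + 1) = a k • f (k + 2) + b k • f k)
    (hg : ∀ k, M *ᵥ g (k + 1) = a k • g (k + 2) + b k • g k)
    (h₀ : f 0 = g 0) (h₁ : f 1 = g 1) (k : ℕ) : f k = g k := by
  induction k using Nat.twoStepInduction with
  | zero => exact h₀
  | one => exact h₁
  | more k ih₀ ih₁ =>
    have scaled := hf k
    rw [ih₀, ih₁, hg k, add_left_inj] at scaled
    exact (smul_right_injective _ (ha k) scaled).symm

end Recurrence

section LengthSixteen

variable {C : Set (Fin 16 → ZMod 2)} {x : Fin 16 → ZMod 2}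

lemma outerNumber_three_three_cases (hreg : IsCompletelyRegular C) (hd : IsMinDist C 6) :
    outerNumber C 3 3 = 3 ∧ outerNumber C 2 4 = 7 ∨
      outerNumber C 3 3 = 5 ∧ outerNumber C 2 4 = 14 := by
  have b04 : outerNumber C 0 4 = 0 := hd.outerNumber_eq_zero (by simp) (by simp)
  have b13 : outerNumber C 1 3 = 0 := hd.outerNumber_eq_zero (by simp) (by simp)
  have b22 : outerNumber C 2 2 = 1 := hreg.outerNumber_self hd (by simp)
  have b06 : outerNumber C 0 6 ≠ 0 := by
    obtain ⟨c, hc, c', hc', -, hcc'⟩ := hd.2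
    exact hcc' ▸ hreg.outerNumber_zero_ne_zero hc hc'
  have eq₀ : 16 * outerNumber C 1 5 = 6 * outerNumber C 0 6 + 12 * outerNumber C 0 4 := by
    simpa using hreg.outerNumber_recurrence hd (i := 0) (by simp) 4
  have eq₁ : outerNumber C 0 4 + 15 * outerNumber C 2 4 =
      5 * outerNumber C 1 5 + 13 * outerNumber C 1 3 := by
    simpa using hreg.outerNumber_recurrence hd (i := 1) (by simp) 3
  have eq₂ : 2 * outerNumber C 1 3 + 14 * outerNumber C 3 3 =
      4 * outerNumber C 2 4 + 14 * outerNumber C 2 2 := by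
    simpa using hreg.outerNumber_recurrence hd (i := 2) (by simp) 2
  have b33_le : 3 * outerNumber C 3 3 ≤ 16 := by
    obtain ⟨x, hx⟩ := hd.exists_distToCode_eq (i := 3) (by simp)
    have c₃ := hreg.neighborCount_mul_outerNumber_self hd.nonempty hx
    have := neighborCount_add_add hd.nonempty hx
    rw [b22] at c₃
    lia
  lia

lemma neighborCount_of_distToCode_eq_three (hreg : IsCompletelyRegular C) (hd : IsMinDist C 6)
    (hx : distToCode C x = 3) :
    neighborCount C x 2 = 3 * outerNumber C 3 3 ∧ neighborCount C x 3 = 0 ∧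
      neighborCount C x 4 = 16 - 3 * outerNumber C 3 3 := by
  have b14 : outerNumber C 1 4 = 0 := hd.outerNumber_eq_zero (by simp) (by simp)
  have b22 : outerNumber C 2 2 = 1 := hreg.outerNumber_self hd (by simp)
  have b23 : outerNumber C 2 3 = 0 := hd.outerNumber_eq_zero (by simp) (by simp)
  have c₃ : neighborCount C x 2 = 3 * outerNumber C 3 3 := by
    simpa [b22] using hreg.neighborCount_mul_outerNumber_self hd.nonempty hx
  have total : neighborCount C x 2 + neighborCount C x 3 + neighborCount C x 4 = 16 :=
    neighborCount_add_add hd.nonempty hx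
  have a₃ : neighborCount C x 3 * outerNumber C 3 3 = 4 * outerNumber C 3 4 := by
    simpa [b23, outerNumber_eq_zero_of_lt] using hreg.neighborCount_recurrence hd.nonempty hx 2
  have eq₂ : 14 * outerNumber C 3 4 = 5 * outerNumber C 2 5 := by
    simpa [b14, b23] using hreg.outerNumber_recurrence hd (i := 2) (by simp) 3
  -- By `eq₂`, `5 ∣ B 3 4`, so `a₃` forces `20 ∣ neighborCount C x 3 ≤ 7` if `B 3 3 = 3`, and
  -- `4 ∣ neighborCount C x 3 ≤ 1` if `B 3 3 = 5`.
  rcases outerNumber_three_three_cases hreg hd with ⟨b33, -⟩ | ⟨b33, -⟩ <;>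
    rw [b33] at a₃ c₃ ⊢ <;> lia

lemma exists_distToCode_eq_four (hreg : IsCompletelyRegular C) (hd : IsMinDist C 6) :
    ∃ x, distToCode C x = 4 := by
  obtain ⟨x, hx⟩ := hd.exists_distToCode_eq (i := 3) (by simp)
  obtain ⟨-, -, b₃⟩ := neighborCount_of_distToCode_eq_three hreg hd hx
  have := outerNumber_three_three_cases hreg hd
  exact exists_distToCode_eq_of_neighborCount_ne_zero (x := x) (by lia)

lemma three_mul_outerNumber_lt_neighborCount (hreg : IsCompletelyRegular C) (hd : IsMinDist C 6)
    (hx : distToCode C x = 4) : 3 * outerNumber C 3 3 < neighborCount C x 3 := by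
  obtain ⟨y, hy, hlt⟩ := exists_neighborCount_lt hd.nonempty hx
  rwa [(neighborCount_of_distToCode_eq_three hreg hd hy).1] at hlt

-- If `B 3 3 = 3`, the recurrence forces `c₄ ∈ {12, 16}`, hence `B 4 4 ∈ {9, 12}`, and then
-- `5 * B 3 5 = 24 + 7 * B 4 4` has no solution.
lemma outerNumber_three_three_eq_five (hreg : IsCompletelyRegular C) (hd : IsMinDist C 6) :
    outerNumber C 3 3 = 5 := by
  obtain ⟨b33, b24⟩ | ⟨b33, -⟩ := outerNumber_three_three_cases hreg hd
  swap
  · exact b33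
  exfalso
  obtain ⟨x, hx⟩ := hd.exists_distToCode_eq (i := 3) (by simp)
  obtain ⟨y, hy⟩ := exists_distToCode_eq_four hreg hd
  obtain ⟨c₃, a₃, b₃⟩ := neighborCount_of_distToCode_eq_three hreg hd hx
  have c₄_mul : neighborCount C y 3 * outerNumber C 3 3 = 4 * outerNumber C 4 4 :=
    hreg.neighborCount_mul_outerNumber_self hd.nonempty hy
  have c₄_gt := three_mul_outerNumber_lt_neighborCount hreg hd hy
  have c₄_le : neighborCount C y 3 ≤ 16 := by
    have := neighborCount_add_add hd.nonempty hy
    lia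
  have b35 : 9 * outerNumber C 2 4 + 7 * outerNumber C 4 4 =
      5 * outerNumber C 3 5 + 13 * outerNumber C 3 3 := by
    simpa [c₃, a₃, b₃, b33] using hreg.neighborCount_recurrence hd.nonempty hx 3
  rw [b33] at c₄_mul c₄_gt b35
  lia

lemma neighborCount_of_distToCode_eq_four (hreg : IsCompletelyRegular C) (hd : IsMinDist C 6)
    (hx : distToCode C x = 4) :
    neighborCount C x 3 = 16 ∧ neighborCount C x 4 = 0 ∧ neighborCount C x 5 = 0 := by
  have total : neighborCount C x 3 + neighborCount C x 4 + neighborCount C x 5 = 16 :=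
    neighborCount_add_add hd.nonempty hx
  have := three_mul_outerNumber_lt_neighborCount hreg hd hx
  have := outerNumber_three_three_eq_five hreg hd
  lia

/-- The intersection matrix of the code: row `i` holds the intersection numbers `c`, `a`, `b` at
distance `i` from the code, in columns `i - 1`, `i`, `i + 1`. -/
def intersectionMatrix : Matrix (Fin 5) (Fin 5) ℕ :=
  !![0, 16,  0,  0,  0;
     1,  0, 15,  0,  0;
     0,  2,  0, 14,  0;
     0,  0, 15,  0,  1;
     0,  0,  0, 16,  0]

lemma intersectionMatrix_mulVec_outerNumber (hreg : IsCompletelyRegular C) (hd : IsMinDist C 6)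
    (k : ℕ) :
    intersectionMatrix *ᵥ (fun i => outerNumber C i (k + 1)) =
      (k + 2) • (fun i : Fin 5 => outerNumber C i (k + 2)) +
        (16 - k) • (fun i : Fin 5 => outerNumber C i k) := by
  obtain ⟨y, hy⟩ := hd.exists_distToCode_eq (i := 3) (by simp)
  obtain ⟨z, hz⟩ := exists_distToCode_eq_four hreg hd
  obtain ⟨c₃, a₃, b₃⟩ := neighborCount_of_distToCode_eq_three hreg hd hy
  obtain ⟨c₄, a₄, b₄⟩ := neighborCount_of_distToCode_eq_four hreg hd hz
  have level₀ := hreg.outerNumber_recurrence hd (i := 0) (by simp) k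
  have level₁ := hreg.outerNumber_recurrence hd (i := 1) (by simp) k
  have level₂ := hreg.outerNumber_recurrence hd (i := 2) (by simp) k
  have level₃ := hreg.neighborCount_recurrence hd.nonempty hy k
  have level₄ := hreg.neighborCount_recurrence hd.nonempty hz k
  simp only [Nat.reduceAdd, c₃, a₃, b₃, outerNumber_three_three_eq_five hreg hd] at level₃
  simp only [Nat.reduceAdd, c₄, a₄, b₄] at level₄
  ext i
  fin_cases i
  · simpa [intersectionMatrix, mulVec, dotProduct, Fin.sum_univ_five] using level₀
  · simpa [intersectionMatrix, mulVec, dotProduct, Fin.sum_univ_five] using level₁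
  · simpa [intersectionMatrix, mulVec, dotProduct, Fin.sum_univ_five] using level₂
  · simpa [intersectionMatrix, mulVec, dotProduct, Fin.sum_univ_five] using level₃
  · simpa [intersectionMatrix, mulVec, dotProduct, Fin.sum_univ_five] using level₄

/-- Column `k` of the outer distribution matrix, solved from the recurrence; it vanishes for
`k > 16`. -/
def outerColumn (k : ℕ) (i : Fin 5) : ℕ :=
  (![[1, 0, 0, 0,  0,  0, 112,  0,  30,  0, 112,  0,  0, 0, 0, 0, 1],
     [0, 1, 0, 0,  0, 42,   0, 85,   0, 85,   0, 42,  0, 0, 0, 1, 0],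
     [0, 0, 1, 0, 14,  0,  63,  0, 100,  0,  63,  0, 14, 0, 1, 0, 0],
     [0, 0, 0, 5,  0, 33,   0, 90,   0, 90,   0, 33,  0, 5, 0, 0, 0],
     [0, 0, 0, 0, 20,  0,  48,  0, 120,  0,  48,  0, 20, 0, 0, 0, 0]] i).getD k 0

lemma outerColumn_eq_zero {k : ℕ} (hk : 16 < k) : outerColumn k = 0 := by
  ext i
  fin_cases i <;> exact List.getD_eq_default _ _ hk

lemma intersectionMatrix_mulVec_outerColumn (k : ℕ) :
    intersectionMatrix *ᵥ outerColumn (k + 1) =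
      (k + 2) • outerColumn (k + 2) + (16 - k) • outerColumn k := by
  obtain hk | hk := le_or_gt k 16
  · ext i
    revert k i
    decide
  · simp [outerColumn_eq_zero, hk, hk.trans_le]

lemma outerNumber_eq_outerColumn (hreg : IsCompletelyRegular C) (hd : IsMinDist C 6) (k : ℕ)
    (i : Fin 5) : outerNumber C i k = outerColumn k i := by
  refine congrFun (eq_of_mulVec_recurrence (f := fun k (i : Fin 5) => outerNumber C i k)
    (fun k => (k + 1).succ_ne_zero) (intersectionMatrix_mulVec_outerNumber hreg hd)
    intersectionMatrix_mulVec_outerColumn ?_ ?_ k) i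
  · ext i
    fin_cases i
    · exact hreg.outerNumber_self hd (by simp)
    all_goals exact outerNumber_eq_zero_of_lt (by simp)
  · ext i
    fin_cases i
    · exact hd.outerNumber_eq_zero (by simp) (by simp)
    · exact hreg.outerNumber_self hd (by simp)
    all_goals exact outerNumber_eq_zero_of_lt (by simp)

lemma outerNumber_zero_eq_ite (hreg : IsCompletelyRegular C) (hd : IsMinDist C 6) (k : ℕ) :
    outerNumber C 0 k = if k = 0 then 1 else if k = 6 then 112 else if k = 8 then 30
      else if k = 10 then 112 else if k = 16 then 1 else 0 := by
  rw [show outerNumber C 0 k = outerColumn k 0 from outerNumber_eq_outerColumn hreg hd k 0]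
  obtain hk | hk := le_or_gt k 16
  · revert k
    decide
  · rw [outerColumn_eq_zero hk, Pi.zero_apply]
    lia

lemma ncard_eq_256 (hreg : IsCompletelyRegular C) (hd : IsMinDist C 6) : C.ncard = 256 := by
  simp only [hreg.ncard_eq_sum_outerNumber hd.nonempty, outerNumber_zero_eq_ite hreg hd]
  decide

end LengthSixteen

/-- A binary completely regular code of length 16 with minimum distance 6 has
distance distribution `(1,0,0,0,0,0,112,0,30,0,112,0,0,0,0,0,1)`; in particular all
distances between codewords lie in `{0, 6, 8, 10, 16}`. -/
theorem stmt_17 (C : Set (Fin 16 → ZMod 2)) (hC : C.Nonempty)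
    (hreg : IsCompletelyRegular C) (hd : IsMinDist C 6) :
    (∀ i : ℕ,
      {p : (Fin 16 → ZMod 2) × (Fin 16 → ZMod 2) |
          p.1 ∈ C ∧ p.2 ∈ C ∧ hammingDist p.1 p.2 = i}.ncard =
        if i = 0 then 256 else if i = 6 then 112 * 256 else if i = 8 then 30 * 256
          else if i = 10 then 112 * 256 else if i = 16 then 256 else 0) ∧
    ∀ α ∈ C, ∀ β ∈ C, hammingDist α β ∈ ({0, 6, 8, 10, 16} : Set ℕ) := by
  refine ⟨fun i => ?_, fun α hα β hβ => ?_⟩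
  · rw [hreg.ncard_pairs_hammingDist_eq, ncard_eq_256 hreg hd, outerNumber_zero_eq_ite hreg hd]
    split_ifs <;> rfl
  · have realized := hreg.outerNumber_zero_ne_zero hα hβ
    rw [outerNumber_zero_eq_ite hreg hd] at realized
    simp only [Set.mem_insert_iff, Set.mem_singleton_iff]
    lia
end
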